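/- arXiv:2111.12738 — 4 statements merged into one kernel-verified Lean document; each statement's English description precedes it below -/
import Mathlib

section
/- (Lemma 2, second-term bound, up to second order in the step size.) Let H be a self-adjoint linear operator on 𝓗, let ψ be a unit vector, write E = E_ψ and ⟨H²⟩ = ⟨ψ, H²ψ⟩, and fix ε ∈ [0, √2]. Define c_α = √((1 − |α|)² + 2α(1 − |α|)E + α²⟨H²⟩) for α ∈ [−1, 1], define χ(ψ, ε, δ) as the minimum of (1/c_α) · |(1 + 2δE)(1 − |α| + αE) − 2δ((1 − |α|)E + α⟨H²⟩)| over all α ∈ [−1, 1] satisfying |1 − |α| + αE| ≥ c_α (1 − ε²/2), and let ζ(ψ, ε) := ε² ‖H‖_∞ + 2 · max_{α ∈ [0, min{ε²/2, 1}]} | α E − √(1 − (1 − α)²) · √(Var(H)_ψ) |. Then there exist constants C ≥ 0 and δ₀ > 0 (depending only on H, ψ and ε) such that for all 0 < δ < δ₀ and every unit vector ψ* with B(ψ, ψ*) ≤ ε, one has B̃((I + δ(E − H))ψ, (I + δ(E − H))ψ*) ≤ √(2 + 2δ ζ(ψ, ε) − 2 χ(ψ, ε, δ)) + C δ², where for arbitrary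 (not necessarily normalized) vectors u, v the generalized Bures metric is B̃(u, v) = √(⟨u, u⟩ + ⟨v, v⟩ − 2|⟨u, v⟩|). -/
open scoped InnerProductSpace

/-- The energy `E_ψ = ⟨ψ, Hψ⟩` of a state `ψ` for a Hamiltonian `H`. -/
noncomputable def energy {𝓗 : Type*} [NormedAddCommGroup 𝓗] [InnerProductSpace ℂ 𝓗]
    (H : 𝓗 →L[ℂ] 𝓗) (ψ : 𝓗) : ℝ := (⟪ψ, H ψ⟫_ℂ).re

/-- The second moment `⟨H²⟩ = ⟨ψ, H²ψ⟩`. -/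
noncomputable def secondMoment {𝓗 : Type*} [NormedAddCommGroup 𝓗] [InnerProductSpace ℂ 𝓗]
    (H : 𝓗 →L[ℂ] 𝓗) (ψ : 𝓗) : ℝ := (⟪ψ, H (H ψ)⟫_ℂ).re

/-- The energy variance `Var(H)_ψ = ⟨ψ, H²ψ⟩ − E_ψ²`. -/
noncomputable def energyVar {𝓗 : Type*} [NormedAddCommGroup 𝓗] [InnerProductSpace ℂ 𝓗]
    (H : 𝓗 →L[ℂ] 𝓗) (ψ : 𝓗) : ℝ := secondMoment H ψ - (energy H ψ) ^ 2

/-- `ζ(ψ, ε) = ε²‖H‖_∞ + 2 max_{α ∈ [0, min{ε²/2, 1}]} |α E_ψ − √(1 − (1 − α)²) √(Var(H)_ψ)|`. -/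
noncomputable def zeta {𝓗 : Type*} [NormedAddCommGroup 𝓗] [InnerProductSpace ℂ 𝓗]
    (H : 𝓗 →L[ℂ] 𝓗) (ψ : 𝓗) (ε : ℝ) : ℝ :=
  ε ^ 2 * ‖H‖ +
    2 * sSup ((fun α : ℝ =>
        |α * energy H ψ - Real.sqrt (1 - (1 - α) ^ 2) * Real.sqrt (energyVar H ψ)|) ''
      Set.Icc (0 : ℝ) (min (ε ^ 2 / 2) 1))

/-- `c_α = √((1 − |α|)² + 2α(1 − |α|)E + α²⟨H²⟩)`. -/
noncomputable def cAlpha {𝓗 : Type*} [NormedAddCommGroup 𝓗] [InnerProductSpace ℂ 𝓗]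
    (H : 𝓗 →L[ℂ] 𝓗) (ψ : 𝓗) (α : ℝ) : ℝ :=
  Real.sqrt ((1 - |α|) ^ 2 + 2 * α * (1 - |α|) * energy H ψ + α ^ 2 * secondMoment H ψ)

/-- `χ(ψ, ε, δ)`: the minimum of
`(1/c_α)|(1 + 2δE)(1 − |α| + αE) − 2δ((1 − |α|)E + α⟨H²⟩)|`
over `α ∈ [−1, 1]` with `|1 − |α| + αE| ≥ c_α(1 − ε²/2)`. -/
noncomputable def chi {𝓗 : Type*} [NormedAddCommGroup 𝓗] [InnerProductSpace ℂ 𝓗]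
    (H : 𝓗 →L[ℂ] 𝓗) (ψ : 𝓗) (ε δ : ℝ) : ℝ :=
  sInf ((fun α : ℝ =>
      (1 / cAlpha H ψ α) *
        |(1 + 2 * δ * energy H ψ) * (1 - |α| + α * energy H ψ) -
          2 * δ * ((1 - |α|) * energy H ψ + α * secondMoment H ψ)|) ''
    {α : ℝ | α ∈ Set.Icc (-1 : ℝ) 1 ∧
      cAlpha H ψ α * (1 - ε ^ 2 / 2) ≤ |1 - |α| + α * energy H ψ|})

section helpers

variable {𝓗 : Type*} [NormedAddCommGroup 𝓗] [InnerProductSpace ℂ 𝓗]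

lemma chi_le_of_mem (H : 𝓗 →L[ℂ] 𝓗) (ψ : 𝓗) (ε δ α : ℝ) (hα : |α| ≤ 1)
    (hc : cAlpha H ψ α * (1 - ε ^ 2 / 2) ≤ |1 - |α| + α * energy H ψ|) :
    chi H ψ ε δ ≤ (1 / cAlpha H ψ α) *
        |(1 + 2 * δ * energy H ψ) * (1 - |α| + α * energy H ψ) -
          2 * δ * ((1 - |α|) * energy H ψ + α * secondMoment H ψ)| := by
  unfold chi
  apply csInf_le
  · refine ⟨0, ?_⟩
    rintro _ ⟨x, _, rfl⟩
    have : 0 ≤ cAlpha H ψ x := Real.sqrt_nonneg _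
    positivity
  · exact ⟨α, ⟨abs_le.mp hα, hc⟩, rfl⟩

lemma chi_le_zero (H : 𝓗 →L[ℂ] 𝓗) (ψ : 𝓗) (ε δ : ℝ) (hv : energyVar H ψ = 0) :
    chi H ψ ε δ ≤ 0 := by
  have hM : secondMoment H ψ = energy H ψ ^ 2 := by
    unfold energyVar at hv; linarith
  obtain ⟨α, hα, h0⟩ : ∃ α : ℝ, |α| ≤ 1 ∧ 1 - |α| + α * energy H ψ = 0 := by
    rcases le_total (energy H ψ) 0 with h | h
    · have h1 : 0 < 1 - energy H ψ := by linarith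
      have h2 : |1 / (1 - energy H ψ)| = 1 / (1 - energy H ψ) := abs_of_pos (by positivity)
      refine ⟨1 / (1 - energy H ψ), ?_, ?_⟩
      · rw [h2, div_le_one h1]; linarith
      · rw [h2]; field_simp; ring
    · have h1 : 0 < 1 + energy H ψ := by linarith
      have h2 : |-(1 / (1 + energy H ψ))| = 1 / (1 + energy H ψ) := by
        rw [abs_neg]; exact abs_of_pos (by positivity)
      refine ⟨-(1 / (1 + energy H ψ)), ?_, ?_⟩
      · rw [h2, div_le_one h1]; linarith
      · rw [h2]; field_simp; ring
  have hc : cAlpha H ψ α = 0 := by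
    unfold cAlpha
    rw [hM, show (1 - |α|) ^ 2 + 2 * α * (1 - |α|) * energy H ψ + α ^ 2 * energy H ψ ^ 2
      = (1 - |α| + α * energy H ψ) ^ 2 by ring, h0]
    simp
  have := chi_le_of_mem H ψ ε δ α hα (by rw [hc]; simp)
  rw [hc] at this
  simpa using this

lemma chi_le (H : 𝓗 →L[ℂ] 𝓗) (ψ : 𝓗) (ε δ a s : ℝ) (hv : 0 ≤ energyVar H ψ)
    (hs : 0 ≤ s) (has : a ^ 2 + s ^ 2 = 1) (ha0 : 0 ≤ a) (ha : 1 - ε ^ 2 / 2 ≤ a) :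
    chi H ψ ε δ ≤ |a - 2 * δ * Real.sqrt (energyVar H ψ) * s| := by
  rcases hv.eq_or_lt with hv | hv
  · exact (chi_le_zero H ψ ε δ hv.symm).trans (abs_nonneg _)
  set σ := Real.sqrt (energyVar H ψ) with hσ
  have hσ0 : 0 < σ := Real.sqrt_pos.mpr hv
  have hM : secondMoment H ψ = energy H ψ ^ 2 + σ ^ 2 := by
    rw [hσ, Real.sq_sqrt hv.le]; unfold energyVar; ring
  set E := energy H ψ with hE
  obtain ⟨q, hq⟩ : ∃ q, q = s / σ := ⟨_, rfl⟩
  obtain ⟨p, hp⟩ : ∃ p, p = a - q * E := ⟨_, rfl⟩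
  have hs' : s = q * σ := by rw [hq]; field_simp
  have hq0 : 0 ≤ q := by rw [hq]; positivity
  have hk : 0 < |p| + q := by
    rcases hq0.eq_or_lt with h | h
    · have : s = 0 := by rw [hs', ← h]; ring
      have ha1 : a ≠ 0 := by
        rintro rfl
        rw [this] at has; norm_num at has
      rw [hp, ← h]
      simpa using ha1
    · positivity
  obtain ⟨k, hkd⟩ : ∃ k, k = |p| + q := ⟨_, rfl⟩
  rw [← hkd] at hk
  obtain ⟨τ, hτ, hτp⟩ : ∃ τ : ℝ, |τ| = 1 ∧ |p| = τ * p := by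
    rcases le_total 0 p with h | h
    · exact ⟨1, by simp, by rw [abs_of_nonneg h]; ring⟩
    · exact ⟨-1, by simp, by rw [abs_of_nonpos h]; ring⟩
  have hτ2 : τ ^ 2 = 1 := by rw [← sq_abs, hτ]; norm_num
  obtain ⟨α, hαd⟩ : ∃ α, α = τ * q / k := ⟨_, rfl⟩
  have habs : |α| = q / k := by
    rw [hαd, abs_div, abs_mul, hτ, abs_of_nonneg hq0, abs_of_pos hk]; ring
  have h1 : 1 - |α| = τ * p / k := by
    rw [habs, ← hτp]; field_simp; linarith
  have h2 : 1 - |α| + α * E = τ * a / k := by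
    rw [h1, hαd, hp]; field_simp; ring
  have hc : cAlpha H ψ α = 1 / k := by
    unfold cAlpha
    rw [← hE, hM, show (1 - |α|) ^ 2 + 2 * α * (1 - |α|) * E + α ^ 2 * (E ^ 2 + σ ^ 2)
      = (1 - |α| + α * E) ^ 2 + α ^ 2 * σ ^ 2 by ring, h2, hαd,
      show (τ * a / k) ^ 2 + (τ * q / k) ^ 2 * σ ^ 2 = τ ^ 2 * (a ^ 2 + (q * σ) ^ 2) / k ^ 2 by
        ring, ← hs', has, hτ2, show (1 * 1 / k ^ 2 : ℝ) = (1 / k) ^ 2 by ring]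
    exact Real.sqrt_sq (by positivity)
  have hle : |α| ≤ 1 := by
    rw [habs, div_le_one hk, hkd]; linarith [abs_nonneg p]
  have := chi_le_of_mem H ψ ε δ α hle (by
    rw [hc, ← hE, h2, abs_div, abs_mul, hτ, abs_of_nonneg ha0, abs_of_pos hk, one_mul,
      div_mul_eq_mul_div, one_mul]
    gcongr)
  refine this.trans (le_of_eq ?_)
  rw [hc, ← hE, hM, show (1 + 2 * δ * E) * (1 - |α| + α * E) -
      2 * δ * ((1 - |α|) * E + α * (E ^ 2 + σ ^ 2))
      = (1 - |α| + α * E) - 2 * δ * σ ^ 2 * α by ring, h2, hαd,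
      show τ * a / k - 2 * δ * σ ^ 2 * (τ * q / k) = τ * (a - 2 * δ * σ * (q * σ)) / k by ring,
      ← hs', abs_div, abs_mul, hτ, abs_of_pos hk]
  field_simp

lemma zeta_ge (H : 𝓗 →L[ℂ] 𝓗) (ψ : 𝓗) (ε α : ℝ) (h0 : 0 ≤ α) (h1 : α ≤ ε ^ 2 / 2)
    (h2 : α ≤ 1) :
    ε ^ 2 * ‖H‖ + 2 * |α * energy H ψ -
      Real.sqrt (1 - (1 - α) ^ 2) * Real.sqrt (energyVar H ψ)| ≤ zeta H ψ ε := by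
  unfold zeta
  gcongr
  apply le_csSup
  · apply IsCompact.bddAbove
    apply isCompact_Icc.image
    fun_prop
  · exact ⟨α, ⟨h0, le_min h1 h2⟩, rfl⟩

lemma energyVar_nonneg (H : 𝓗 →L[ℂ] 𝓗) (hH : ∀ x y : 𝓗, ⟪H x, y⟫_ℂ = ⟪x, H y⟫_ℂ)
    (ψ : 𝓗) (hψ : ‖ψ‖ = 1) : 0 ≤ energyVar H ψ := by
  have h1 : secondMoment H ψ = ‖H ψ‖ ^ 2 := by
    unfold secondMoment
    rw [← hH, inner_self_eq_norm_sq_to_K]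
    norm_cast
  have h2 : |energy H ψ| ≤ ‖H ψ‖ := by
    unfold energy
    refine (Complex.abs_re_le_norm _).trans ((norm_inner_le_norm _ _).trans ?_)
    rw [hψ, one_mul]
  unfold energyVar
  rw [h1, ← sq_abs (energy H ψ)]
  have := pow_le_pow_left₀ (abs_nonneg _) h2 2
  linarith

lemma abs_energy_le (H : 𝓗 →L[ℂ] 𝓗) (ψ : 𝓗) : |energy H ψ| ≤ ‖H‖ * ‖ψ‖ ^ 2 := by
  unfold energy
  refine (Complex.abs_re_le_norm _).trans ((norm_inner_le_norm _ _).trans ?_)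
  have := H.le_opNorm ψ
  nlinarith [norm_nonneg ψ]

/-- the algebraic heart: the phase-aligned estimate. -/
lemma core_aligned (H : 𝓗 →L[ℂ] 𝓗) (hH : ∀ x y : 𝓗, ⟪H x, y⟫_ℂ = ⟪x, H y⟫_ℂ)
    (ψ φ : 𝓗) (hψ : ‖ψ‖ = 1) (hφ : ‖φ‖ = 1) (a δ : ℝ) (hδ : 0 ≤ δ) (ha : ⟪ψ, φ⟫_ℂ = (a : ℂ)) :
    δ * (energy H ψ - energy H φ) -
      ‖⟪ψ, φ⟫_ℂ + 2 * (δ : ℂ) * ((energy H ψ : ℂ) * ⟪ψ, φ⟫_ℂ - ⟪ψ, H φ⟫_ℂ)‖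
      ≤ δ * ((2 - 2 * a) * ‖H‖) + 2 * δ * ((1 - a) * energy H ψ) - a := by
  have hd : ‖φ - ψ‖ ^ 2 = 2 - 2 * a := by
    rw [@norm_sub_sq ℂ, hφ, hψ, ← inner_conj_symm, ha]
    simp; ring
  have h1 : energy H (φ - ψ) = energy H φ + energy H ψ - 2 * (⟪ψ, H φ⟫_ℂ).re := by
    have : (⟪φ, H ψ⟫_ℂ).re = (⟪ψ, H φ⟫_ℂ).re := by
      rw [← hH, ← inner_conj_symm, Complex.conj_re]
    unfold energy
    simp only [map_sub, inner_sub_left, inner_sub_right, Complex.sub_re]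
    rw [this]; ring
  have h2 := (abs_le.mp (abs_energy_le H (φ - ψ))).1
  rw [hd, h1] at h2
  have h3 := Complex.re_le_norm
    (⟪ψ, φ⟫_ℂ + 2 * (δ : ℂ) * ((energy H ψ : ℂ) * ⟪ψ, φ⟫_ℂ - ⟪ψ, H φ⟫_ℂ))
  have h4 : (⟪ψ, φ⟫_ℂ + 2 * (δ : ℂ) * ((energy H ψ : ℂ) * ⟪ψ, φ⟫_ℂ - ⟪ψ, H φ⟫_ℂ)).re
      = a + 2 * δ * (energy H ψ * a - (⟪ψ, H φ⟫_ℂ).re) := by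
    rw [ha]; simp
  rw [h4] at h3
  nlinarith [mul_le_mul_of_nonneg_left h2 hδ]

lemma core (H : 𝓗 →L[ℂ] 𝓗) (hH : ∀ x y : 𝓗, ⟪H x, y⟫_ℂ = ⟪x, H y⟫_ℂ)
    (ψ φ : 𝓗) (hψ : ‖ψ‖ = 1) (hφ : ‖φ‖ = 1) (a δ : ℝ) (hδ : 0 ≤ δ) (ha : ‖⟪ψ, φ⟫_ℂ‖ = a) :
    δ * (energy H ψ - energy H φ) -
      ‖⟪ψ, φ⟫_ℂ + 2 * (δ : ℂ) * ((energy H ψ : ℂ) * ⟪ψ, φ⟫_ℂ - ⟪ψ, H φ⟫_ℂ)‖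
      ≤ δ * ((2 - 2 * a) * ‖H‖) + 2 * δ * ((1 - a) * energy H ψ) - a := by
  obtain ⟨θ, hθ, hθo⟩ : ∃ θ : ℂ, ‖θ‖ = 1 ∧ θ * ⟪ψ, φ⟫_ℂ = (a : ℂ) := by
    by_cases h : ⟪ψ, φ⟫_ℂ = 0
    · refine ⟨1, by simp, ?_⟩
      rw [h] at ha ⊢
      rw [← ha]; simp
    · refine ⟨(a : ℂ) / ⟪ψ, φ⟫_ℂ, ?_, div_mul_cancel₀ _ h⟩
      have : 0 < ‖⟪ψ, φ⟫_ℂ‖ := norm_pos_iff.mpr h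
      rw [norm_div, ha, Complex.norm_real, Real.norm_eq_abs, abs_of_pos (ha ▸ this)]
      exact div_self (ha ▸ this).ne'
  have h := core_aligned H hH ψ (θ • φ) hψ (by rw [norm_smul, hθ, hφ, one_mul]) a δ hδ
    (by rw [inner_smul_right, hθo])
  have hE : energy H (θ • φ) = energy H φ := by
    unfold energy
    rw [map_smul, inner_smul_right, inner_smul_left, ← mul_assoc, Complex.mul_conj,
      Complex.normSq_eq_norm_sq, hθ]
    simp
  have hn : ‖⟪ψ, θ • φ⟫_ℂ + 2 * (δ : ℂ) * ((energy H ψ : ℂ) * ⟪ψ, θ • φ⟫_ℂ - ⟪ψ, H (θ • φ)⟫_ℂ)‖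
      = ‖⟪ψ, φ⟫_ℂ + 2 * (δ : ℂ) * ((energy H ψ : ℂ) * ⟪ψ, φ⟫_ℂ - ⟪ψ, H φ⟫_ℂ)‖ := by
    rw [map_smul, inner_smul_right, inner_smul_right,
      show θ * ⟪ψ, φ⟫_ℂ + 2 * (δ : ℂ) * ((energy H ψ : ℂ) * (θ * ⟪ψ, φ⟫_ℂ) - θ * ⟪ψ, H φ⟫_ℂ)
        = θ * (⟪ψ, φ⟫_ℂ + 2 * (δ : ℂ) * ((energy H ψ : ℂ) * ⟪ψ, φ⟫_ℂ - ⟪ψ, H φ⟫_ℂ)) by ring,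
      norm_mul, hθ, one_mul]
  rw [hE, hn] at h
  exact h

lemma expand_bound (H : 𝓗 →L[ℂ] 𝓗) (hH : ∀ x y : 𝓗, ⟪H x, y⟫_ℂ = ⟪x, H y⟫_ℂ)
    (ψ φ : 𝓗) (hψ : ‖ψ‖ = 1) (hφ : ‖φ‖ = 1) (δ : ℝ) :
    ‖ψ + (δ : ℂ) • ((energy H ψ : ℂ) • ψ - H ψ)‖ ^ 2 +
      ‖φ + (δ : ℂ) • ((energy H ψ : ℂ) • φ - H φ)‖ ^ 2 -
      2 * ‖⟪ψ + (δ : ℂ) • ((energy H ψ : ℂ) • ψ - H ψ),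
            φ + (δ : ℂ) • ((energy H ψ : ℂ) • φ - H φ)⟫_ℂ‖ ≤
    2 + 2 * (δ * (energy H ψ - energy H φ) -
      ‖⟪ψ, φ⟫_ℂ + 2 * (δ : ℂ) * ((energy H ψ : ℂ) * ⟪ψ, φ⟫_ℂ - ⟪ψ, H φ⟫_ℂ)‖)
      + 4 * (|energy H ψ| + ‖H‖) ^ 2 * δ ^ 2 := by
  set E := energy H ψ with hE
  set g := |E| + ‖H‖ with hg
  have hG : ∀ x : 𝓗, ‖x‖ = 1 → ‖(E : ℂ) • x - H x‖ ≤ g := by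
    intro x hx
    refine (norm_sub_le _ _).trans ?_
    have := H.le_opNorm x
    rw [norm_smul, hx, Complex.norm_real, Real.norm_eq_abs, mul_one]
    rw [hx, mul_one] at this
    linarith
  have hg0 : 0 ≤ g := by positivity
  have hsq : ∀ x : 𝓗, ‖x‖ = 1 → ‖x + (δ : ℂ) • ((E : ℂ) • x - H x)‖ ^ 2 ≤
      1 + 2 * (δ * (E - energy H x)) + g ^ 2 * δ ^ 2 := by
    intro x hx
    have h1 : RCLike.re (⟪x, (δ : ℂ) • ((E : ℂ) • x - H x)⟫_ℂ) = δ * (E - energy H x) := by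
      rw [inner_smul_right, inner_sub_right, inner_smul_right, inner_self_eq_norm_sq_to_K, hx]
      simp [energy]
    rw [@norm_add_sq ℂ, h1, hx, norm_smul, mul_pow, Complex.norm_real, Real.norm_eq_abs, sq_abs]
    have := pow_le_pow_left₀ (norm_nonneg _) (hG x hx) 2
    nlinarith [mul_le_mul_of_nonneg_left this (sq_nonneg δ)]
  have hψ' := hsq ψ hψ
  have hφ' := hsq φ hφ
  rw [← hE, sub_self, mul_zero, mul_zero] at hψ'
  have hin : ⟪ψ + (δ : ℂ) • ((E : ℂ) • ψ - H ψ), φ + (δ : ℂ) • ((E : ℂ) • φ - H φ)⟫_ℂ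
      = (⟪ψ, φ⟫_ℂ + 2 * (δ : ℂ) * ((E : ℂ) * ⟪ψ, φ⟫_ℂ - ⟪ψ, H φ⟫_ℂ))
        + (δ : ℂ) ^ 2 * ⟪(E : ℂ) • ψ - H ψ, (E : ℂ) • φ - H φ⟫_ℂ := by
    simp only [inner_add_left, inner_add_right, inner_smul_left, inner_smul_right,
      inner_sub_left, inner_sub_right, Complex.conj_ofReal, hH]
    ring
  have hrem : ‖(δ : ℂ) ^ 2 * ⟪(E : ℂ) • ψ - H ψ, (E : ℂ) • φ - H φ⟫_ℂ‖ ≤ g ^ 2 * δ ^ 2 := by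
    rw [norm_mul, norm_pow, Complex.norm_real, Real.norm_eq_abs, sq_abs]
    have : ‖⟪(E : ℂ) • ψ - H ψ, (E : ℂ) • φ - H φ⟫_ℂ‖ ≤ g * g :=
      (norm_inner_le_norm _ _).trans (mul_le_mul (hG ψ hψ) (hG φ hφ) (norm_nonneg _) hg0)
    nlinarith [mul_le_mul_of_nonneg_left this (sq_nonneg δ)]
  rw [hin]
  set u := ⟪ψ, φ⟫_ℂ + 2 * (δ : ℂ) * ((E : ℂ) * ⟪ψ, φ⟫_ℂ - ⟪ψ, H φ⟫_ℂ)
  set v := (δ : ℂ) ^ 2 * ⟪(E : ℂ) • ψ - H ψ, (E : ℂ) • φ - H φ⟫_ℂ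
  have h3 : ‖u‖ ≤ ‖u + v‖ + ‖v‖ := by
    have := norm_sub_le (u + v) v
    simpa using this
  linarith

end helpers

/-- Lemma 2 (second-term bound, up to second order in the step size): for all small `δ > 0`
and every unit vector `ψ*` with `B(ψ, ψ*) ≤ ε`,
`B̃((I + δ(E − H))ψ, (I + δ(E − H))ψ*) ≤ √(2 + 2δζ(ψ, ε) − 2χ(ψ, ε, δ)) + Cδ²`. -/
theorem second_term_bound {𝓗 : Type*} [NormedAddCommGroup 𝓗]
    [InnerProductSpace ℂ 𝓗] [FiniteDimensional ℂ 𝓗]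
    (H : 𝓗 →L[ℂ] 𝓗) (hH : ∀ x y : 𝓗, ⟪H x, y⟫_ℂ = ⟪x, H y⟫_ℂ)
    (ψ : 𝓗) (hψ : ‖ψ‖ = 1) (ε : ℝ) (hε : ε ∈ Set.Icc (0 : ℝ) (Real.sqrt 2)) :
    ∃ C : ℝ, 0 ≤ C ∧ ∃ δ₀ : ℝ, 0 < δ₀ ∧ ∀ δ : ℝ, 0 < δ → δ < δ₀ →
      ∀ ψs : 𝓗, ‖ψs‖ = 1 → Real.sqrt (2 - 2 * ‖⟪ψ, ψs⟫_ℂ‖) ≤ ε →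
        Real.sqrt
            (‖ψ + (δ : ℂ) • ((energy H ψ : ℂ) • ψ - H ψ)‖ ^ 2 +
              ‖ψs + (δ : ℂ) • ((energy H ψ : ℂ) • ψs - H ψs)‖ ^ 2 -
              2 * ‖⟪ψ + (δ : ℂ) • ((energy H ψ : ℂ) • ψ - H ψ),
                    ψs + (δ : ℂ) • ((energy H ψ : ℂ) • ψs - H ψs)⟫_ℂ‖) ≤
          Real.sqrt (2 + 2 * δ * zeta H ψ ε - 2 * chi H ψ ε δ) + C * δ ^ 2 := by
  have hv := energyVar_nonneg H hH ψ hψ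
  have hσ0 : 0 ≤ Real.sqrt (energyVar H ψ) := Real.sqrt_nonneg _
  have hε0 := hε.1
  have hε2 : ε ^ 2 ≤ 2 := by
    have := pow_le_pow_left₀ hε0 hε.2 2
    rwa [Real.sq_sqrt (by norm_num)] at this
  have hζ0 : ε ^ 2 * ‖H‖ ≤ zeta H ψ ε := by
    have := zeta_ge H ψ ε 0 le_rfl (by positivity) zero_le_one
    refine le_trans ?_ this
    have := abs_nonneg (0 * energy H ψ -
      Real.sqrt (1 - (1 - 0) ^ 2) * Real.sqrt (energyVar H ψ))
    linarith
  -- the two ingredients, for small step sizes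
  have key : ∃ δ₀ : ℝ, 0 < δ₀ ∧ ∀ δ : ℝ, 0 < δ → δ < δ₀ →
      chi H ψ ε δ ≤ 1 - ε ^ 2 / 2 ∧
      ∀ ψs : 𝓗, ‖ψs‖ = 1 → 1 - ε ^ 2 / 2 ≤ ‖⟪ψ, ψs⟫_ℂ‖ →
        δ * (energy H ψ - energy H ψs) -
          ‖⟪ψ, ψs⟫_ℂ + 2 * (δ : ℂ) * ((energy H ψ : ℂ) * ⟪ψ, ψs⟫_ℂ - ⟪ψ, H ψs⟫_ℂ)‖
          ≤ δ * zeta H ψ ε - chi H ψ ε δ := by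
    rcases hε2.eq_or_lt with h2 | h2
    · refine ⟨1, one_pos, fun δ hδ _ => ?_⟩
      have hchi : chi H ψ ε δ ≤ 0 := by
        set r := Real.sqrt (1 + (2 * δ * Real.sqrt (energyVar H ψ)) ^ 2) with hr
        have hr0 : 0 < r := Real.sqrt_pos.mpr (by positivity)
        have hr2 : r ^ 2 = 1 + (2 * δ * Real.sqrt (energyVar H ψ)) ^ 2 :=
          Real.sq_sqrt (by positivity)
        have := chi_le H ψ ε δ (2 * δ * Real.sqrt (energyVar H ψ) / r) (1 / r) hv
          (by positivity) (by field_simp; rw [hr2]; ring) (by positivity)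
          (by rw [h2]; norm_num; positivity)
        refine this.trans (le_of_eq ?_)
        rw [abs_eq_zero]; ring
      refine ⟨by rw [h2]; linarith, fun ψs hψs _ => ?_⟩
      have e1 := (abs_le.mp (abs_energy_le H ψ)).2
      have e2 := (abs_le.mp (abs_energy_le H ψs)).1
      rw [hψ] at e1
      rw [hψs] at e2
      rw [h2] at hζ0
      have e3 : energy H ψ - energy H ψs ≤ zeta H ψ ε := by linarith
      have e4 := mul_le_mul_of_nonneg_left e3 hδ.le
      have e5 := norm_nonneg
        (⟪ψ, ψs⟫_ℂ + 2 * (δ : ℂ) * ((energy H ψ : ℂ) * ⟪ψ, ψs⟫_ℂ - ⟪ψ, H ψs⟫_ℂ))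
      linarith
    · have ha0 : 0 < 1 - ε ^ 2 / 2 := by linarith
      refine ⟨(1 - ε ^ 2 / 2) / (2 * Real.sqrt (energyVar H ψ) + 1), by positivity,
        fun δ hδ hδ' => ?_⟩
      rw [lt_div_iff₀ (by positivity)] at hδ'
      have hchi : ∀ a : ℝ, 1 - ε ^ 2 / 2 ≤ a → a ≤ 1 →
          chi H ψ ε δ ≤ a - 2 * δ * Real.sqrt (energyVar H ψ) * Real.sqrt (1 - a ^ 2) := by
        intro a ha ha1
        have h1 : 0 ≤ 1 - a ^ 2 := by nlinarith
        have hs1 : Real.sqrt (1 - a ^ 2) ≤ 1 := by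
          rw [Real.sqrt_le_left zero_le_one]; nlinarith
        have := chi_le H ψ ε δ a (Real.sqrt (1 - a ^ 2)) hv (Real.sqrt_nonneg _)
          (by rw [Real.sq_sqrt h1]; ring) (by linarith) ha
        rwa [abs_of_nonneg] at this
        have := mul_le_mul_of_nonneg_left hs1
          (show 0 ≤ 2 * δ * Real.sqrt (energyVar H ψ) by positivity)
        nlinarith
      refine ⟨?_, fun ψs hψs hov => ?_⟩
      · have h1 := hchi _ le_rfl (by nlinarith)
        have : 0 ≤ 2 * δ * Real.sqrt (energyVar H ψ) *
          Real.sqrt (1 - (1 - ε ^ 2 / 2) ^ 2) := by positivity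
        linarith
      · obtain ⟨a, ha⟩ : ∃ a, ‖⟪ψ, ψs⟫_ℂ‖ = a := ⟨_, rfl⟩
        rw [ha] at hov
        have ha1 : a ≤ 1 := by
          rw [← ha]
          refine (norm_inner_le_norm _ _).trans ?_
          rw [hψ, hψs, one_mul]
        have h1 := core H hH ψ ψs hψ hψs a δ hδ.le ha
        have h2 := hchi a hov ha1
        have h3 := zeta_ge H ψ ε (1 - a) (by linarith) (by linarith) (by linarith)
        rw [sub_sub_cancel] at h3
        have h4 := le_abs_self
          ((1 - a) * energy H ψ - Real.sqrt (1 - a ^ 2) * Real.sqrt (energyVar H ψ))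
        have h5 : (2 - 2 * a) * ‖H‖ ≤ ε ^ 2 * ‖H‖ := by
          gcongr; linarith
        have h6 : (2 - 2 * a) * ‖H‖ + 2 * ((1 - a) * energy H ψ -
            Real.sqrt (1 - a ^ 2) * Real.sqrt (energyVar H ψ)) ≤ zeta H ψ ε := by linarith
        have h7 := mul_le_mul_of_nonneg_left h6 hδ.le
        linarith
  obtain ⟨δ₀, hδ₀, key⟩ := key
  refine ⟨4 * (|energy H ψ| + ‖H‖) ^ 2 / ε, by positivity, δ₀, hδ₀, ?_⟩
  intro δ hδ hδ' ψs hψs hB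
  obtain ⟨hchi, hkey⟩ := key δ hδ hδ'
  have hov : 1 - ε ^ 2 / 2 ≤ ‖⟪ψ, ψs⟫_ℂ‖ := by
    rw [Real.sqrt_le_left hε0] at hB
    linarith
  rcases hε0.eq_or_lt with h0 | h0
  · -- ε = 0
    have hle : ‖⟪ψ, ψs⟫_ℂ‖ = ‖ψ‖ * ‖ψs‖ := by
      apply le_antisymm (norm_inner_le_norm _ _)
      rw [hψ, hψs]; rw [← h0] at hov; linarith
    have hψ0 : ψ ≠ 0 := by rintro rfl; simp at hψ
    have hψs0 : ψs ≠ 0 := by rintro rfl; simp at hψs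
    obtain ⟨r, hr, rfl⟩ := (norm_inner_eq_norm_iff hψ0 hψs0).mp hle
    have hr1 : ‖r‖ = 1 := by rw [norm_smul, hψ, mul_one] at hψs; exact hψs
    set x := ψ + (δ : ℂ) • ((energy H ψ : ℂ) • ψ - H ψ) with hx
    have hx' : r • ψ + (δ : ℂ) • ((energy H ψ : ℂ) • (r • ψ) - H (r • ψ)) = r • x := by
      rw [hx, map_smul]; module
    rw [hx', inner_smul_right, norm_mul, norm_smul, hr1, inner_self_eq_norm_sq_to_K]
    have : ‖x‖ ^ 2 + (1 * ‖x‖) ^ 2 - 2 * (1 * ‖((‖x‖ : ℂ)) ^ 2‖) = 0 := by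
      rw [norm_pow, Complex.norm_real, norm_norm]; ring
    erw [this]
    rw [Real.sqrt_zero, ← h0]
    simp
  · have hX := expand_bound H hH ψ ψs hψ hψs δ
    have hk := hkey ψs hψs hov
    have hζ : 0 ≤ zeta H ψ ε := le_trans (by positivity) hζ0
    set K := 4 * (|energy H ψ| + ‖H‖) ^ 2 with hK
    have hK0 : 0 ≤ K := by positivity
    set Y := 2 + 2 * δ * zeta H ψ ε - 2 * chi H ψ ε δ with hY
    have hYε : ε ^ 2 ≤ Y := by
      have : 0 ≤ δ * zeta H ψ ε := by positivity
      rw [hY]; linarith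
    have hsY : ε ≤ Real.sqrt Y := Real.le_sqrt_of_sq_le hYε
    have hsq : Real.sqrt Y ^ 2 = Y := Real.sq_sqrt (le_trans (by positivity) hYε)
    apply Real.sqrt_le_iff.mpr
    refine ⟨by positivity, hX.trans ?_⟩
    have h1 : ε * (K / ε * δ ^ 2) = K * δ ^ 2 := by field_simp
    have h2 : 0 ≤ K / ε * δ ^ 2 := by positivity
    have h3 := mul_le_mul_of_nonneg_right hsY h2
    have h4 : 0 ≤ K * δ ^ 2 := by positivity
    nlinarith [sq_nonneg (K / ε * δ ^ 2)]
end

section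
/- (Theorem 2, a posteriori error bound for variational quantum real time evolution.) Let H be a self-adjoint linear operator on 𝓗, let ħ > 0 and T > 0. Let ψ*: [0, T] → 𝓗 be the exact real-time evolution, i.e., the solution of iħ·dψ*_t/dt = Hψ*_t with unit initial state ψ*_0, and let ψ: [0, T] → 𝓗 be a continuously differentiable path of unit vectors with ψ_0 = ψ*_0. Define the gradient error e_t := ψ̇_t + (i/ħ)(H − E_{ψ_t})ψ_t − i·Im⟨ψ_t, ψ̇_t⟩ ψ_t. Then B(ψ*_T, ψ_T) ≤ ∫₀ᵀ ‖e_t‖ dt. -/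
open scoped InnerProductSpace

lemma skew_re_zero {𝓗 : Type*} [NormedAddCommGroup 𝓗] [InnerProductSpace ℂ 𝓗]
    (H : 𝓗 →L[ℂ] 𝓗) (hH : ∀ x y : 𝓗, ⟪H x, y⟫_ℂ = ⟪x, H y⟫_ℂ) (hbar : ℝ) (x : 𝓗) :
    (⟪x, (-(Complex.I / (hbar : ℂ))) • H x⟫_ℂ).re = 0 := by
  have h1 : (⟪x, H x⟫_ℂ).im = 0 := by
    have h := inner_conj_symm (𝕜 := ℂ) x (H x)
    rw [hH x x] at h
    exact Complex.conj_eq_iff_im.mp h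
  have h2 : (-(Complex.I / (hbar : ℂ))) = ((-hbar⁻¹ : ℝ) : ℂ) * Complex.I := by
    push_cast
    ring
  rw [inner_smul_right, h2]
  simp [Complex.mul_re, h1]

lemma hasDerivAt_normSq {𝓗 : Type*} [NormedAddCommGroup 𝓗] [InnerProductSpace ℂ 𝓗]
    {d : ℝ → 𝓗} {d' : 𝓗} {t : ℝ} (h : HasDerivAt d d' t) :
    HasDerivAt (fun s => ‖d s‖ ^ 2) (2 * (⟪d t, d'⟫_ℂ).re) t := by
  have h1 := (HasDerivAt.inner ℂ h h)
  have h2 := (Complex.reCLM.hasFDerivAt.comp_hasDerivAt t h1)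
  have h3 : (fun s => ‖d s‖ ^ 2) = (fun s => Complex.reCLM (⟪d s, d s⟫_ℂ)) := by
    funext s
    simp [inner_self_eq_norm_sq_to_K, ← Complex.ofReal_pow]
  rw [h3]
  refine HasDerivAt.congr_deriv h2 ?_
  have h4 : (⟪d', d t⟫_ℂ).re = (⟪d t, d'⟫_ℂ).re := by
    rw [← inner_conj_symm, Complex.conj_re]
  rw [Complex.reCLM_apply, Complex.add_re, h4]
  ring

lemma norm_const {𝓗 : Type*} [NormedAddCommGroup 𝓗] [InnerProductSpace ℂ 𝓗]
    (H : 𝓗 →L[ℂ] 𝓗) (hH : ∀ x y : 𝓗, ⟪H x, y⟫_ℂ = ⟪x, H y⟫_ℂ) (hbar T : ℝ) (hT : 0 < T)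
    (ψs : ℝ → 𝓗)
    (hψsode : ∀ t ∈ Set.Icc (0 : ℝ) T,
      HasDerivAt ψs ((-(Complex.I / (hbar : ℂ))) • H (ψs t)) t) :
    ‖ψs T‖ ^ 2 = ‖ψs 0‖ ^ 2 := by
  have hd : ∀ t ∈ Set.Icc (0 : ℝ) T, HasDerivAt (fun s => ‖ψs s‖ ^ 2) 0 t := by
    intro t ht
    have := hasDerivAt_normSq (hψsode t ht)
    rwa [skew_re_zero H hH, mul_zero] at this
  exact constant_of_has_deriv_right_zero
    (fun t ht => (hd t ht).continuousAt.continuousWithinAt)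
    (fun t ht => (hd t ⟨ht.1, ht.2.le⟩).hasDerivWithinAt) T ⟨hT.le, le_rfl⟩

lemma norm_le_integral {𝓗 : Type*} [NormedAddCommGroup 𝓗] [InnerProductSpace ℂ 𝓗]
    (H : 𝓗 →L[ℂ] 𝓗) (hH : ∀ x y : 𝓗, ⟪H x, y⟫_ℂ = ⟪x, H y⟫_ℂ) (hbar T : ℝ) (hT : 0 < T)
    (d f : ℝ → 𝓗) (k : ℝ → ℝ) (hk : Continuous k) (hfk : ∀ t, ‖f t‖ ≤ k t)
    (h0 : d 0 = 0)
    (hd : ∀ t ∈ Set.Icc (0 : ℝ) T,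
      HasDerivAt d (f t + (-(Complex.I / (hbar : ℂ))) • H (d t)) t) :
    ‖d T‖ ≤ ∫ t in (0 : ℝ)..T, k t := by
  refine le_of_forall_pos_le_add fun ε hε => ?_
  have hpos : ∀ t, 0 < ‖d t‖ ^ 2 + ε ^ 2 := fun t => by positivity
  have hder : ∀ t ∈ Set.Icc (0 : ℝ) T, HasDerivAt (fun s => √(‖d s‖ ^ 2 + ε ^ 2))
      ((2 * (⟪d t, f t⟫_ℂ).re) / (2 * √(‖d t‖ ^ 2 + ε ^ 2))) t := by
    intro t ht
    have h1 := hasDerivAt_normSq (hd t ht)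
    rw [inner_add_right, Complex.add_re, skew_re_zero H hH, add_zero] at h1
    exact (h1.add_const (ε ^ 2)).sqrt (hpos t).ne'
  have hB : ∀ t, HasDerivAt (fun s => (∫ u in (0 : ℝ)..s, k u) + ε) (k t) t := fun t =>
    (hk.integral_hasStrictDerivAt 0 t).hasDerivAt.add_const ε
  have key := image_le_of_deriv_right_le_deriv_boundary
    (f := fun s => √(‖d s‖ ^ 2 + ε ^ 2)) (B := fun s => (∫ u in (0 : ℝ)..s, k u) + ε)
    (fun t ht => (hder t ht).continuousAt.continuousWithinAt)
    (fun t ht => (hder t ⟨ht.1, ht.2.le⟩).hasDerivWithinAt)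
    (by simp [h0, Real.sqrt_sq hε.le])
    (fun t _ => (hB t).continuousAt.continuousWithinAt)
    (fun t _ => (hB t).hasDerivWithinAt)
    (by
      intro t _
      have hs := Real.sqrt_pos.mpr (hpos t)
      have h1 : (⟪d t, f t⟫_ℂ).re ≤ ‖d t‖ * ‖f t‖ :=
        (Complex.re_le_norm _).trans (norm_inner_le_norm _ _)
      have h2 : ‖d t‖ ≤ √(‖d t‖ ^ 2 + ε ^ 2) := Real.le_sqrt_of_sq_le (by nlinarith)
      have h3 : ‖d t‖ * ‖f t‖ ≤ √(‖d t‖ ^ 2 + ε ^ 2) * k t :=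
        mul_le_mul h2 (hfk t) (norm_nonneg _) hs.le
      rw [div_le_iff₀ (by positivity)]
      linarith)
    (x := T) ⟨hT.le, le_rfl⟩
  exact (Real.le_sqrt_of_sq_le (by nlinarith)).trans key

/-- Theorem 2 (a posteriori error bound for variational quantum real time evolution):
if `ψ*` solves `ihbarψ̇* = Hψ*`, `ψ` is a C¹ path of unit vectors with the same initial state,
and `e_t := ψ̇_t + (i/hbar)(H − E_{ψ_t})ψ_t − i·Im⟨ψ_t, ψ̇_t⟩ψ_t`, then
`B(ψ*_T, ψ_T) ≤ ∫₀ᵀ ‖e_t‖ dt`. -/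
theorem varqrte_error_bound {𝓗 : Type*} [NormedAddCommGroup 𝓗]
    [InnerProductSpace ℂ 𝓗] [FiniteDimensional ℂ 𝓗]
    (H : 𝓗 →L[ℂ] 𝓗) (hH : ∀ x y : 𝓗, ⟪H x, y⟫_ℂ = ⟪x, H y⟫_ℂ)
    (hbar T : ℝ) (hhbar : 0 < hbar) (hT : 0 < T)
    (ψs ψ ψ' : ℝ → 𝓗)
    (hψs0 : ‖ψs 0‖ = 1)
    (hψsode : ∀ t ∈ Set.Icc (0 : ℝ) T,
      HasDerivAt ψs ((-(Complex.I / (hbar : ℂ))) • H (ψs t)) t)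
    (hψunit : ∀ t ∈ Set.Icc (0 : ℝ) T, ‖ψ t‖ = 1)
    (hinit : ψ 0 = ψs 0)
    (hψder : ∀ t, HasDerivAt ψ (ψ' t) t) (hψ'cont : Continuous ψ')
    (e : ℝ → 𝓗)
    (he : ∀ t, e t = ψ' t +
        (Complex.I / (hbar : ℂ)) • (H (ψ t) - (energy H (ψ t) : ℂ) • ψ t) -
        (Complex.I * ((⟪ψ t, ψ' t⟫_ℂ).im : ℂ)) • ψ t) :
    Real.sqrt (2 - 2 * ‖⟪ψs T, ψ T⟫_ℂ‖) ≤ ∫ t in (0 : ℝ)..T, ‖e t‖ := by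
  have hψc : Continuous ψ := continuous_iff_continuousAt.mpr fun t => (hψder t).continuousAt
  set g : ℝ → ℝ := fun t => energy H (ψ t) / hbar + (⟪ψ t, ψ' t⟫_ℂ).im with hg
  have hgc : Continuous g := by
    have h1 : Continuous fun t => energy H (ψ t) :=
      Complex.continuous_re.comp (hψc.inner (H.continuous.comp hψc))
    have h2 : Continuous fun t => (⟪ψ t, ψ' t⟫_ℂ).im :=
      Complex.continuous_im.comp (hψc.inner hψ'cont)
    exact (h1.div_const hbar).add h2
  have he' : ∀ t, ψ' t = e t + (-(Complex.I / (hbar : ℂ))) • H (ψ t)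
      + (Complex.I * (g t : ℂ)) • ψ t := by
    intro t
    rw [he t, hg]
    push_cast
    module
  have hec : Continuous e := by
    have : e = fun t => ψ' t - (-(Complex.I / (hbar : ℂ))) • H (ψ t)
      - (Complex.I * (g t : ℂ)) • ψ t := by
      funext t
      rw [he' t]
      abel
    rw [this]
    have := Complex.continuous_ofReal.comp hgc
    exact (hψ'cont.sub ((H.continuous.comp hψc).const_smul _)).sub
      ((continuous_const.mul this).smul hψc)
  set G : ℝ → ℝ := fun t => ∫ s in (0 : ℝ)..t, g s with hG
  have hGd : ∀ t, HasDerivAt G (g t) t := fun t => (hgc.integral_hasStrictDerivAt 0 t).hasDerivAt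
  set p : ℝ → ℂ := fun t => Complex.exp (((-G t : ℝ) : ℂ) * Complex.I) with hp
  have hpn : ∀ t, ‖p t‖ = 1 := fun t => Complex.norm_exp_ofReal_mul_I _
  have hpd : ∀ t, HasDerivAt p (p t * (((-g t : ℝ) : ℂ) * Complex.I)) t := fun t =>
    (((hGd t).neg.ofReal_comp).mul_const Complex.I).cexp
  have hφd : ∀ t, HasDerivAt (fun s => p s • ψ s)
      (p t • e t + (-(Complex.I / (hbar : ℂ))) • H (p t • ψ t)) t := by
    intro t
    refine ((hpd t).smul (hψder t)).congr_deriv ?_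
    rw [he' t, map_smul]
    push_cast
    module
  have hbound := norm_le_integral H hH hbar T hT (fun s => p s • ψ s - ψs s)
    (fun s => p s • e s) (fun s => ‖e s‖) hec.norm
    (fun t => by rw [norm_smul, hpn, one_mul]) (by simp [hp, hG, hinit])
    (fun t ht => ((hφd t).sub (hψsode t ht)).congr_deriv (by
      rw [map_sub]
      module))
  refine le_trans ?_ hbound
  have hTm : T ∈ Set.Icc (0 : ℝ) T := ⟨hT.le, le_rfl⟩
  have hns : ‖ψs T‖ ^ 2 = 1 := by rw [norm_const H hH hbar T hT ψs hψsode, hψs0, one_pow]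
  have hnφ : ‖p T • ψ T‖ = 1 := by rw [norm_smul, hpn, hψunit T hTm, one_mul]
  refine Real.sqrt_le_iff.mpr ⟨norm_nonneg _, ?_⟩
  rw [norm_sub_rev, @norm_sub_sq ℂ, hns, hnφ]
  have h1 : RCLike.re (⟪ψs T, p T • ψ T⟫_ℂ) ≤ ‖⟪ψs T, ψ T⟫_ℂ‖ := by
    refine (RCLike.re_le_norm _).trans ?_
    rw [inner_smul_right, norm_mul, hpn, one_mul]
  linarith
end

section
/- (Optimal global-phase rate in variational quantum real time evolution.) Let H be a self-adjoint linear operator on 𝓗, let ħ > 0, let ψ be a unit vector with energy E = E_ψ, and let ψ̇ ∈ 𝓗. Then the function ν ↦ ‖iħψ̇ − (H − ħν)ψ‖² over ν ∈ ℝ attains its unique minimum at ν = E/ħ + Im⟨ψ, ψ̇⟩. -/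
open scoped InnerProductSpace

/-- Optimal global-phase rate in variational quantum real time evolution:
`ν ↦ ‖iħψ̇ − (H − ħν)ψ‖²` attains its unique minimum at `ν = E/ħ + Im⟨ψ, ψ̇⟩`. -/
theorem varqrte_optimal_phase_rate {𝓗 : Type*} [NormedAddCommGroup 𝓗]
    [InnerProductSpace ℂ 𝓗] [FiniteDimensional ℂ 𝓗]
    (H : 𝓗 →L[ℂ] 𝓗) (hH : ∀ x y : 𝓗, ⟪H x, y⟫_ℂ = ⟪x, H y⟫_ℂ)
    (hbar : ℝ) (hhbar : 0 < hbar)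
    (ψ : 𝓗) (hψ : ‖ψ‖ = 1) (ψd : 𝓗) :
    ∀ ν : ℝ, ν ≠ (⟪ψ, H ψ⟫_ℂ).re / hbar + (⟪ψ, ψd⟫_ℂ).im →
      ‖(Complex.I * (hbar : ℂ)) • ψd -
          (H ψ - ((hbar * ((⟪ψ, H ψ⟫_ℂ).re / hbar + (⟪ψ, ψd⟫_ℂ).im) : ℝ) : ℂ) • ψ)‖ ^ 2 <
        ‖(Complex.I * (hbar : ℂ)) • ψd - (H ψ - ((hbar * ν : ℝ) : ℂ) • ψ)‖ ^ 2 := by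
  intro ν hν
  have key : ∀ c : ℝ, ‖(Complex.I * (hbar : ℂ)) • ψd - (H ψ - (c : ℂ) • ψ)‖ ^ 2 =
      ‖(Complex.I * (hbar : ℂ)) • ψd - H ψ‖ ^ 2 +
        2 * (c * (-(hbar * (⟪ψ, ψd⟫_ℂ).im) - (⟪ψ, H ψ⟫_ℂ).re)) + c ^ 2 := by
    intro c
    have h1 : (Complex.I * (hbar : ℂ)) • ψd - (H ψ - (c : ℂ) • ψ) =
        (c : ℂ) • ψ + ((Complex.I * (hbar : ℂ)) • ψd - H ψ) := by abel
    rw [h1, norm_add_sq (𝕜 := ℂ), norm_smul, hψ, inner_smul_left, inner_sub_right,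
      inner_smul_right]
    simp
    ring
  rw [key, key]
  set E := (⟪ψ, H ψ⟫_ℂ).re
  set m := (⟪ψ, ψd⟫_ℂ).im
  have h2 : hbar * (E / hbar + m) = E + hbar * m := by field_simp
  have h3 : hbar * ν - (E + hbar * m) ≠ 0 := by
    rw [← h2, ← mul_sub]
    exact mul_ne_zero hhbar.ne' (sub_ne_zero.mpr hν)
  rw [h2]
  have h4 := pow_pos (abs_pos.mpr h3) 2
  rw [sq_abs] at h4
  nlinarith
end

section
/- (Expansion of the squared gradient-error norm for variational quantum real time evolution.) Let H be a self-adjoint linear operator on 𝓗, let ψ be a unit vector with E = E_ψ, and let ψ̇ ∈ 𝓗 satisfy Re⟨ψ, ψ̇⟩ = 0. Define e := ψ̇ + i(H − E)ψ − i·Im⟨ψ, ψ̇⟩ ψ. Then ‖e‖² = Var(H)_ψ + ‖ψ̇‖² − |⟨ψ, ψ̇⟩|² − 2·Im(⟨ψ̇, Hψ⟩ − E⟨ψ̇, ψ⟩). -/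
open scoped InnerProductSpace

/-- Expansion of the squared gradient-error norm for variational quantum real time
evolution: with `e = ψ̇ + i(H − E)ψ − i·Im⟨ψ, ψ̇⟩ψ` and `Re⟨ψ, ψ̇⟩ = 0`,
`‖e‖² = Var(H)_ψ + ‖ψ̇‖² − |⟨ψ, ψ̇⟩|² − 2Im(⟨ψ̇, Hψ⟩ − E⟨ψ̇, ψ⟩)`. -/
theorem varqrte_gradient_error_sq {𝓗 : Type*} [NormedAddCommGroup 𝓗]
    [InnerProductSpace ℂ 𝓗] [FiniteDimensional ℂ 𝓗]
    (H : 𝓗 →L[ℂ] 𝓗) (hH : ∀ x y : 𝓗, ⟪H x, y⟫_ℂ = ⟪x, H y⟫_ℂ)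
    (ψ ψd : 𝓗) (hψ : ‖ψ‖ = 1) (hre : (⟪ψ, ψd⟫_ℂ).re = 0) :
    ‖ψd + Complex.I • (H ψ - ((⟪ψ, H ψ⟫_ℂ).re : ℂ) • ψ) -
        (Complex.I * ((⟪ψ, ψd⟫_ℂ).im : ℂ)) • ψ‖ ^ 2 =
      ((⟪ψ, H (H ψ)⟫_ℂ).re - (⟪ψ, H ψ⟫_ℂ).re ^ 2) + ‖ψd‖ ^ 2 - ‖⟪ψ, ψd⟫_ℂ‖ ^ 2 -
        2 * (⟪ψd, H ψ⟫_ℂ - (((⟪ψ, H ψ⟫_ℂ).re : ℂ)) * ⟪ψd, ψ⟫_ℂ).im := by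
  have h1 : (⟪ψ, ψ⟫_ℂ) = 1 := by
    rw [inner_self_eq_norm_sq_to_K, hψ]; simp
  have h2 : (⟪H ψ, ψ⟫_ℂ) = ⟪ψ, H ψ⟫_ℂ := hH ψ ψ
  have h3 : (⟪H ψ, H ψ⟫_ℂ) = ⟪ψ, H (H ψ)⟫_ℂ := hH ψ (H ψ)
  have h4 : (⟪ψ, H ψ⟫_ℂ).im = 0 := by
    have h := congrArg Complex.im (inner_conj_symm (𝕜 := ℂ) ψ (H ψ))
    rw [h2, Complex.conj_im] at h
    linarith
  have h5 : (⟪ψd, ψ⟫_ℂ).re = (⟪ψ, ψd⟫_ℂ).re := by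
    rw [← inner_conj_symm (𝕜 := ℂ) ψd ψ, Complex.conj_re]
  have h6 : (⟪ψd, ψ⟫_ℂ).im = -(⟪ψ, ψd⟫_ℂ).im := by
    rw [← inner_conj_symm (𝕜 := ℂ) ψd ψ, Complex.conj_im]
  have h7 : (⟪H ψ, ψd⟫_ℂ).re = (⟪ψd, H ψ⟫_ℂ).re := by
    rw [← inner_conj_symm (𝕜 := ℂ) (H ψ) ψd, Complex.conj_re]
  have h8 : (⟪H ψ, ψd⟫_ℂ).im = -(⟪ψd, H ψ⟫_ℂ).im := by
    rw [← inner_conj_symm (𝕜 := ℂ) (H ψ) ψd, Complex.conj_im]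
  have hn : ∀ x : 𝓗, ‖x‖ ^ 2 = (⟪x, x⟫_ℂ).re := fun x => by
    have := inner_self_eq_norm_sq (𝕜 := ℂ) x
    exact this.symm
  rw [hn, hn, ← Complex.normSq_eq_norm_sq, Complex.normSq_apply]
  simp only [inner_add_left, inner_add_right, inner_sub_left, inner_sub_right,
    inner_smul_left, inner_smul_right, h1, h2, h3, map_mul, Complex.conj_I,
    Complex.conj_ofReal, Complex.add_re, Complex.sub_re, Complex.mul_re, Complex.mul_im,
    Complex.add_im, Complex.sub_im, Complex.neg_re, Complex.neg_im, Complex.I_re, Complex.I_im,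
    Complex.ofReal_re, Complex.ofReal_im, Complex.one_re, Complex.one_im, h4, h5, h6, h7, h8, hre]
  ring
end
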